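/- Linear-time complexity of memoized backtracking matching (Theorem 1): For every NFA A = (Q, q0, F, T) without ε-loops, every input string w over Σ, and every starting position i ∈ {0, …, |w|}, the call Memo^{M0}_{A,w}(q0, i) terminates, and the total number of recursive calls it makes is at most #in(A) · |Q| · (|w| + 1), where #in(A) = max_{q ∈ Q} #in(q); in particular, for a fixed NFA A the number of recursive calls is O(|w|). -/

import Mathlib

namespace RegexMemo

/-! ## Generic runs, `φ`, `sub`, `sub*` -/

variable {α : Type}

/-- `φ_s(ℓ, n)`: the index of the result value of the call at index `ℓ`. -/
def phiAux (isRet : α → Bool) (s : List α) (ℓ n : ℕ) : Option ℕ :=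
  match h : s[ℓ]? with
  | none => none
  | some e =>
    if isRet e then
      if n ≤ 1 then some ℓ
      else phiAux isRet s (ℓ + 1) (n - 1)
    else phiAux isRet s (ℓ + 1) (n + 1)
termination_by s.length - ℓ
decreasing_by
  all_goals
    have hl : ℓ < s.length := by
      by_contra hc
      have : s[ℓ]? = none := List.getElem?_eq_none (by omega)
      simp [this] at h
    omega

/-- `φ_s(ℓ) = φ_s(ℓ, 0)`. -/
def phi (isRet : α → Bool) (s : List α) (ℓ : ℕ) : Option ℕ := phiAux isRet s ℓ 0

/-- `sub(s, ℓ)`: replace the memoization-table invocation at index `ℓ` (an element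
`M(q,i)` together with its immediately following result) by `C(q,i)` followed by the
subsequence `s[ℓ'+1] … s[φ_s(ℓ')]`, where `ℓ'` is the first index with `s[ℓ'] = C(q,i)`.
Here `m2c` maps a memoization element `M(q,i)` to the corresponding call element `C(q,i)`
(and everything else to `none`), and `isRet` recognizes result elements. -/
def subExpand [DecidableEq α] (m2c : α → Option α) (isRet : α → Bool)
    (s : List α) (ℓ : ℕ) : Option (List α) :=
  match s[ℓ]? with
  | some e =>
    match m2c e with
    | some c =>
      match s.findIdx? (· == c) with
      | some ℓ' =>
        match phi isRet s ℓ' with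
        | some m =>
          some (s.take ℓ ++ [c] ++ ((s.drop (ℓ' + 1)).take (m - ℓ')) ++ s.drop (ℓ + 2))
        | none => none
      | none => none
    | none => none
  | none => none

/-- `sub*`: repeatedly locate the first memoization element and expand it,
until no memoization element remains. `SubStar m2c isRet s t` means `sub*(s) = t`. -/
inductive SubStar [DecidableEq α] (m2c : α → Option α) (isRet : α → Bool) :
    List α → List α → Prop where
  | done {s : List α} : s.findIdx? (fun e => (m2c e).isSome) = none →
      SubStar m2c isRet s s
  | step {s s' t : List α} {ℓ : ℕ} :
      s.findIdx? (fun e => (m2c e).isSome) = some ℓ →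
      subExpand m2c isRet s ℓ = some s' →
      SubStar m2c isRet s' t →
      SubStar m2c isRet s t

/-- The number of (recursive) calls recorded in a run: the number of `C`/`M` elements. -/
def callCount (isCall : α → Bool) (s : List α) : ℕ := (s.filter isCall).length

variable {Sigma S : Type}

/-- Results of backtracking matching: `SuccessAt i'` or `Failure`. -/
inductive Result : Type where
  | successAt : ℕ → Result
  | failure : Result
deriving DecidableEq

/-! ## Plain NFAs -/

/-- Transitions of a plain NFA. -/
inductive Trans (Sigma S : Type) : Type where
  | eps : S → Trans Sigma S
  | branch : S → S → Trans Sigma S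
  | char : Sigma → S → Trans Sigma S

/-- A (plain) NFA over the alphabet `Sigma` with (finite) state type `S`:
an initial state, a set of accepting states, and a transition function
(whose value is only relevant on non-accepting states). -/
structure NFA (Sigma S : Type) where
  q0 : S
  F : Set S
  T : S → Trans Sigma S

/-- One ε-step: an `Eps` or `Branch` transition of a non-accepting state. -/
def NFA.epsStep (A : NFA Sigma S) (q q' : S) : Prop :=
  q ∉ A.F ∧ (A.T q = Trans.eps q' ∨ (∃ q'', A.T q = Trans.branch q' q'') ∨
    (∃ q'', A.T q = Trans.branch q'' q'))

/-- The NFA has no ε-loops. -/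
def NFA.NoEpsLoops (A : NFA Sigma S) : Prop :=
  ∀ q : S, ¬ Relation.TransGen A.epsStep q q

open Classical in
/-- The in-degree `#in(q)` of a state of a plain NFA. -/
noncomputable def NFA.inDeg [Fintype S] (A : NFA Sigma S) (q : S) : ℕ :=
  (Finset.univ.filter fun q' : S => q' ∉ A.F ∧ A.T q' = Trans.eps q).card +
  (Finset.univ.filter fun q' : S => q' ∉ A.F ∧ ∃ σ, A.T q' = Trans.char σ q).card +
  (Finset.univ.filter fun q' : S => q' ∉ A.F ∧ ∃ q'', A.T q' = Trans.branch q q'').card +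
  (Finset.univ.filter fun q' : S => q' ∉ A.F ∧ ∃ q'', A.T q' = Trans.branch q'' q).card +
  (if q = A.q0 then 1 else 0)

/-- The maximal in-degree `#in(A)` of a plain NFA. -/
noncomputable def NFA.inDegMax [Fintype S] (A : NFA Sigma S) : ℕ :=
  Finset.univ.sup fun q : S => A.inDeg q

/-- Elements of runs of `Match`/`Memo`: calls `C(q,i)`, memoization-table invocations
`M(q,i)`, and results `S(i')` and `F`. -/
inductive RunElem (S : Type) : Type where
  | call : S → ℕ → RunElem S
  | memo : S → ℕ → RunElem S
  | succ : ℕ → RunElem S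
  | fail : RunElem S
deriving DecidableEq

/-- The run element recording the return of a result. -/
def Result.elem {S : Type} : Result → RunElem S
  | .successAt i => .succ i
  | .failure => .fail

def RunElem.isRet : RunElem S → Bool
  | .succ _ => true
  | .fail => true
  | _ => false

def RunElem.isCall : RunElem S → Bool
  | .call _ _ => true
  | .memo _ _ => true
  | _ => false

/-- `M(q,i) ↦ C(q,i)`. -/
def memoToCall : RunElem S → Option (RunElem S)
  | .memo q i => some (.call q i)
  | _ => none

/-- Big-step semantics (together with the produced run) of the backtracking
matching algorithm `Match` for plain NFAs:
`MatchRun A w q i r s` means the call `Match_{A,w}(q, i)` terminates with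
result `r` and produces the run `s`. -/
inductive MatchRun (A : NFA Sigma S) (w : List Sigma) :
    S → ℕ → Result → List (RunElem S) → Prop where
  | accept {q : S} {i : ℕ} : q ∈ A.F →
      MatchRun A w q i (.successAt i) [.call q i, .succ i]
  | eps {q q' : S} {i : ℕ} {r : Result} {s : List (RunElem S)} :
      q ∉ A.F → A.T q = Trans.eps q' →
      MatchRun A w q' i r s →
      MatchRun A w q i r (.call q i :: s ++ [r.elem])
  | branchSucc {q q' q'' : S} {i i' : ℕ} {s : List (RunElem S)} :
      q ∉ A.F → A.T q = Trans.branch q' q'' →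
      MatchRun A w q' i (.successAt i') s →
      MatchRun A w q i (.successAt i') (.call q i :: s ++ [RunElem.succ i'])
  | branchFail {q q' q'' : S} {i : ℕ} {r : Result} {s s' : List (RunElem S)} :
      q ∉ A.F → A.T q = Trans.branch q' q'' →
      MatchRun A w q' i .failure s →
      MatchRun A w q'' i r s' →
      MatchRun A w q i r (.call q i :: s ++ s' ++ [r.elem])
  | charSucc {q q' : S} {σ : Sigma} {i : ℕ} {r : Result} {s : List (RunElem S)} :
      q ∉ A.F → A.T q = Trans.char σ q' →
      w[i]? = some σ →
      MatchRun A w q' (i + 1) r s →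
      MatchRun A w q i r (.call q i :: s ++ [r.elem])
  | charFail {q q' : S} {σ : Sigma} {i : ℕ} :
      q ∉ A.F → A.T q = Trans.char σ q' →
      w[i]? ≠ some σ →
      MatchRun A w q i .failure [.call q i, .fail]

/-- Record `M(q,i) := Failure` in the memoization table if the result is a failure. -/
def recFail [DecidableEq S] (M : S × ℕ → Bool) (q : S) (i : ℕ) : Result → (S × ℕ → Bool)
  | .failure => fun p => if p = (q, i) then true else M p
  | _ => M

/-- Big-step semantics (with resulting memoization table and produced run) of the
memoized backtracking matching algorithm `Memo` for plain NFAs: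
`MemoRun A w q i M M' r s` means the call `Memo^M_{A,w}(q, i)` terminates with result
`r`, final memoization table `M'` (where `M p = true` means `Failure` is recorded at the
key `p`), and produces the run `s`. -/
inductive MemoRun [DecidableEq S] (A : NFA Sigma S) (w : List Sigma) :
    S → ℕ → (S × ℕ → Bool) → (S × ℕ → Bool) → Result → List (RunElem S) → Prop where
  | memoHit {q : S} {i : ℕ} {M : S × ℕ → Bool} : M (q, i) = true →
      MemoRun A w q i M M .failure [.memo q i, .fail]
  | accept {q : S} {i : ℕ} {M : S × ℕ → Bool} : M (q, i) = false → q ∈ A.F →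
      MemoRun A w q i M M (.successAt i) [.call q i, .succ i]
  | eps {q q' : S} {i : ℕ} {M M' : S × ℕ → Bool} {r : Result} {s : List (RunElem S)} :
      M (q, i) = false → q ∉ A.F → A.T q = Trans.eps q' →
      MemoRun A w q' i M M' r s →
      MemoRun A w q i M (recFail M' q i r) r (.call q i :: s ++ [r.elem])
  | branchSucc {q q' q'' : S} {i i' : ℕ} {M M' : S × ℕ → Bool} {s : List (RunElem S)} :
      M (q, i) = false → q ∉ A.F → A.T q = Trans.branch q' q'' →
      MemoRun A w q' i M M' (.successAt i') s →
      MemoRun A w q i M M' (.successAt i') (.call q i :: s ++ [RunElem.succ i'])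
  | branchFail {q q' q'' : S} {i : ℕ} {M M' M'' : S × ℕ → Bool} {r : Result}
      {s s' : List (RunElem S)} :
      M (q, i) = false → q ∉ A.F → A.T q = Trans.branch q' q'' →
      MemoRun A w q' i M M' .failure s →
      MemoRun A w q'' i M' M'' r s' →
      MemoRun A w q i M (recFail M'' q i r) r (.call q i :: s ++ s' ++ [r.elem])
  | charSucc {q q' : S} {σ : Sigma} {i : ℕ} {M M' : S × ℕ → Bool} {r : Result}
      {s : List (RunElem S)} :
      M (q, i) = false → q ∉ A.F → A.T q = Trans.char σ q' →
      w[i]? = some σ →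
      MemoRun A w q' (i + 1) M M' r s →
      MemoRun A w q i M (recFail M' q i r) r (.call q i :: s ++ [r.elem])
  | charFail {q q' : S} {σ : Sigma} {i : ℕ} {M : S × ℕ → Bool} :
      M (q, i) = false → q ∉ A.F → A.T q = Trans.char σ q' →
      w[i]? ≠ some σ →
      MemoRun A w q i M (recFail M q i .failure) .failure [.call q i, .fail]

/-! ## NFAs with sub-automata -/

/-- Kind labels of sub-automaton transitions: positive/negative look-ahead/look-behind
and atomic grouping. -/
inductive Kind : Type where
  | pla | nla | plb | nlb | at
deriving DecidableEq

mutual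
/-- An NFA with sub-automata `⟨Q, q0, F, T⟩`: a list of top-level states, an initial
state, accepting states, and a transition function (relevant on non-accepting top-level
states) whose transitions may be labelled with further NFAs with sub-automata. -/
inductive SubNFA (Sigma S : Type) : Type where
  | mk : List S → S → List S → (S → SubTrans Sigma S) → SubNFA Sigma S

/-- Transitions of an NFA with sub-automata. -/
inductive SubTrans (Sigma S : Type) : Type where
  | eps : S → SubTrans Sigma S
  | branch : S → S → SubTrans Sigma S
  | char : Sigma → S → SubTrans Sigma S
  | sub : Kind → SubNFA Sigma S → S → SubTrans Sigma S
end

/-- Top-level states `Q`. -/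
def SubNFA.Q : SubNFA Sigma S → List S
  | .mk Q _ _ _ => Q

/-- Initial state `q0`. -/
def SubNFA.q0 : SubNFA Sigma S → S
  | .mk _ q0 _ _ => q0

/-- Accepting states `F`. -/
def SubNFA.F : SubNFA Sigma S → List S
  | .mk _ _ F _ => F

/-- Transition function `T`. -/
def SubNFA.T : SubNFA Sigma S → S → SubTrans Sigma S
  | .mk _ _ _ T => T

mutual
/-- All automata occurring within an NFA with sub-automata (including itself), each
together with its nesting depth of atomic grouping (the number of enclosing
`at`-sub-automaton boundaries). -/
def SubNFA.compsD : SubNFA Sigma S → List (SubNFA Sigma S × ℕ)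
  | .mk Q q0 F T => (.mk Q q0 F T, 0) :: Q.flatMap (fun q => SubTrans.subCompsD (T q))

def SubTrans.subCompsD : SubTrans Sigma S → List (SubNFA Sigma S × ℕ)
  | .sub k A' _ => (SubNFA.compsD A').map (fun p => (p.1, p.2 + (if k = Kind.at then 1 else 0)))
  | _ => []
end

/-- All automata occurring within `A` (including `A` itself). -/
def SubNFA.comps (A : SubNFA Sigma S) : List (SubNFA Sigma S) :=
  A.compsD.map Prod.fst

/-- The set (list) of all states `P` occurring within `A`. -/
def SubNFA.allStates (A : SubNFA Sigma S) : List S :=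
  A.comps.flatMap SubNFA.Q

/-- The nesting depth of atomic grouping `ν_A(q)` of a state `q` of `A`. -/
def SubNFA.nu [DecidableEq S] (A : SubNFA Sigma S) (q : S) : ℕ :=
  (A.compsD.map (fun p => if q ∈ p.1.Q then p.2 else 0)).sum

/-- The maximal nesting depth of atomic grouping `ν(A)`. -/
def SubNFA.nuMax [DecidableEq S] (A : SubNFA Sigma S) : ℕ :=
  (A.allStates.map A.nu).foldr max 0

/-- Local wellformedness of one automaton: the initial state is a top-level state,
accepting states are top-level states, and transitions of non-accepting top-level
states lead to top-level states. -/
def SubNFA.LocalOK (B : SubNFA Sigma S) : Prop :=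
  B.q0 ∈ B.Q ∧ (∀ f ∈ B.F, f ∈ B.Q) ∧ ∀ q ∈ B.Q, q ∉ B.F →
    match B.T q with
    | .eps q' => q' ∈ B.Q
    | .branch q' q'' => q' ∈ B.Q ∧ q'' ∈ B.Q
    | .char _ q' => q' ∈ B.Q
    | .sub _ _ q' => q' ∈ B.Q

/-- Wellformedness of an NFA with sub-automata: every component automaton is locally
wellformed, and all the state lists are disjoint and duplicate-free (so that `P` is
the disjoint union of the top-level state sets of all components). -/
def SubNFA.WF (A : SubNFA Sigma S) : Prop :=
  (∀ B ∈ A.comps, B.LocalOK) ∧ A.allStates.Nodup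

/-- The kind labels of all sub-automaton transitions occurring in `A`. -/
def SubNFA.kinds [DecidableEq S] (A : SubNFA Sigma S) : List Kind :=
  A.comps.flatMap fun B =>
    (B.Q.filter (fun q => decide (q ∉ B.F))).filterMap fun q =>
      match B.T q with
      | .sub k _ _ => some k
      | _ => none

/-- A la-NFA: all kind labels are look-around labels (for simplicity, only positive
look-ahead `pla` is treated). -/
def SubNFA.IsLaNFA [DecidableEq S] (A : SubNFA Sigma S) : Prop :=
  ∀ k ∈ A.kinds, k = Kind.pla

/-- An at-NFA: all kind labels are `at` (atomic grouping). -/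
def SubNFA.IsAtNFA [DecidableEq S] (A : SubNFA Sigma S) : Prop :=
  ∀ k ∈ A.kinds, k = Kind.at

/-- A (la,at)-NFA in which (for simplicity) only the kinds `pla` and `at` occur. -/
def SubNFA.IsLaAtNFA [DecidableEq S] (A : SubNFA Sigma S) : Prop :=
  ∀ k ∈ A.kinds, k = Kind.pla ∨ k = Kind.at

/-- One global ε-step of an NFA with sub-automata: an `Eps` or `Branch` transition, or a
`Sub` transition with a look-around kind (from the transition's source to its successor),
of a non-accepting top-level state of any component automaton. -/
def SubNFA.epsStep (A : SubNFA Sigma S) (q q' : S) : Prop :=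
  ∃ B ∈ A.comps, q ∈ B.Q ∧ q ∉ B.F ∧
    (B.T q = SubTrans.eps q' ∨
     (∃ q'', B.T q = SubTrans.branch q' q'') ∨
     (∃ q'', B.T q = SubTrans.branch q'' q') ∨
     (∃ k A'', B.T q = SubTrans.sub k A'' q' ∧ k ≠ Kind.at))

/-- The NFA with sub-automata has no ε-loops. -/
def SubNFA.NoEpsLoops (A : SubNFA Sigma S) : Prop :=
  ∀ q : S, ¬ Relation.TransGen A.epsStep q q

/-- All pairs (state, transition) of non-accepting top-level states of all component
automata of `A`. -/
def SubNFA.allTransNF [DecidableEq S] (A : SubNFA Sigma S) : List (S × SubTrans Sigma S) :=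
  A.comps.flatMap fun B => (B.Q.filter (fun q => decide (q ∉ B.F))).map fun q => (q, B.T q)

/-- How many of the buckets in the definition of the in-degree of `q` a given
transition contributes to. -/
def SubTrans.hits [DecidableEq S] (t : SubTrans Sigma S) (q : S) : ℕ :=
  match t with
  | .eps q' => if q' = q then 1 else 0
  | .char _ q' => if q' = q then 1 else 0
  | .branch q' q'' => (if q' = q then 1 else 0) + (if q'' = q then 1 else 0)
  | .sub _ _ q' => if q' = q then 1 else 0

/-- The in-degree `#in(q)` of a state of an NFA with sub-automata. -/
def SubNFA.inDeg [DecidableEq S] (A : SubNFA Sigma S) (q : S) : ℕ :=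
  (A.allTransNF.map (fun p => p.2.hits q)).sum +
  (if q ∈ A.comps.map SubNFA.q0 then 1 else 0)

/-- The maximal in-degree `#in(A)`. -/
def SubNFA.inDegMax [DecidableEq S] (A : SubNFA Sigma S) : ℕ :=
  (A.allStates.map A.inDeg).foldr max 0

/-! ## run elements for `Memo-la` and `Match-(la,at)` -/

/-- Elements of runs of `Memo-la` (and of `Match-(la,at)`): calls `C(q,i)`,
memoization-table invocations `M(q,i)`, and the results `S(i')`, `S'` (bare success),
and `F`. -/
inductive LaRunElem (S : Type) : Type where
  | call : S → ℕ → LaRunElem S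
  | memo : S → ℕ → LaRunElem S
  | succAt : ℕ → LaRunElem S
  | succ : LaRunElem S
  | fail : LaRunElem S
deriving DecidableEq

def LaRunElem.isRet : LaRunElem S → Bool
  | .succAt _ => true
  | .succ => true
  | .fail => true
  | _ => false

def LaRunElem.isCall : LaRunElem S → Bool
  | .call _ _ => true
  | .memo _ _ => true
  | _ => false

def laMemoToCall : LaRunElem S → Option (LaRunElem S)
  | .memo q i => some (.call q i)
  | _ => none

def Result.laElem {S : Type} : Result → LaRunElem S
  | .successAt i => .succAt i
  | .failure => .fail

/-! ## The backtracking matching algorithm `Match-(la,at)` -/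

/-- Big-step semantics (with produced run) of the backtracking matching algorithm
`Match-(la,at)` for NFAs with sub-automata: `LAMatchRun w A q i r s` means the call
`Match-(la,at)_{A,w}(q, i)` terminates with result `r` and produces the run `s`.
For simplicity, only the look-around kind `pla` (besides `at`) is treated. -/
inductive LAMatchRun (w : List Sigma) :
    SubNFA Sigma S → S → ℕ → Result → List (LaRunElem S) → Prop where
  | accept {A : SubNFA Sigma S} {q : S} {i : ℕ} : q ∈ A.F →
      LAMatchRun w A q i (.successAt i) [.call q i, .succAt i]
  | eps {A : SubNFA Sigma S} {q q' : S} {i : ℕ} {r : Result} {s : List (LaRunElem S)} :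
      q ∉ A.F → A.T q = SubTrans.eps q' →
      LAMatchRun w A q' i r s →
      LAMatchRun w A q i r (.call q i :: s ++ [r.laElem])
  | branchSucc {A : SubNFA Sigma S} {q q' q'' : S} {i i' : ℕ} {s : List (LaRunElem S)} :
      q ∉ A.F → A.T q = SubTrans.branch q' q'' →
      LAMatchRun w A q' i (.successAt i') s →
      LAMatchRun w A q i (.successAt i') (.call q i :: s ++ [LaRunElem.succAt i'])
  | branchFail {A : SubNFA Sigma S} {q q' q'' : S} {i : ℕ} {r : Result}
      {s s' : List (LaRunElem S)} :
      q ∉ A.F → A.T q = SubTrans.branch q' q'' →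
      LAMatchRun w A q' i .failure s →
      LAMatchRun w A q'' i r s' →
      LAMatchRun w A q i r (.call q i :: s ++ s' ++ [r.laElem])
  | charSucc {A : SubNFA Sigma S} {q q' : S} {σ : Sigma} {i : ℕ} {r : Result}
      {s : List (LaRunElem S)} :
      q ∉ A.F → A.T q = SubTrans.char σ q' →
      w[i]? = some σ →
      LAMatchRun w A q' (i + 1) r s →
      LAMatchRun w A q i r (.call q i :: s ++ [r.laElem])
  | charFail {A : SubNFA Sigma S} {q q' : S} {σ : Sigma} {i : ℕ} :
      q ∉ A.F → A.T q = SubTrans.char σ q' →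
      w[i]? ≠ some σ →
      LAMatchRun w A q i .failure [.call q i, .fail]
  | plaSucc {A A' : SubNFA Sigma S} {q q' : S} {i i' : ℕ} {r : Result}
      {s1 s2 : List (LaRunElem S)} :
      q ∉ A.F → A.T q = SubTrans.sub Kind.pla A' q' →
      LAMatchRun w A' A'.q0 i (.successAt i') s1 →
      LAMatchRun w A q' i r s2 →
      LAMatchRun w A q i r (.call q i :: s1 ++ s2 ++ [r.laElem])
  | plaFail {A A' : SubNFA Sigma S} {q q' : S} {i : ℕ} {s1 : List (LaRunElem S)} :
      q ∉ A.F → A.T q = SubTrans.sub Kind.pla A' q' →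
      LAMatchRun w A' A'.q0 i .failure s1 →
      LAMatchRun w A q i .failure (.call q i :: s1 ++ [LaRunElem.fail])
  | atSucc {A A' : SubNFA Sigma S} {q q' : S} {i i' : ℕ} {r : Result}
      {s1 s2 : List (LaRunElem S)} :
      q ∉ A.F → A.T q = SubTrans.sub Kind.at A' q' →
      LAMatchRun w A' A'.q0 i (.successAt i') s1 →
      LAMatchRun w A q' i' r s2 →
      LAMatchRun w A q i r (.call q i :: s1 ++ s2 ++ [r.laElem])
  | atFail {A A' : SubNFA Sigma S} {q q' : S} {i : ℕ} {s1 : List (LaRunElem S)} :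
      q ∉ A.F → A.T q = SubTrans.sub Kind.at A' q' →
      LAMatchRun w A' A'.q0 i .failure s1 →
      LAMatchRun w A q i .failure (.call q i :: s1 ++ [LaRunElem.fail])

/-! ## `Memo-la` -/

/-- Values of the memoization table of `Memo-la`: `Failure` or `Success`. -/
inductive LaVal : Type where
  | success : LaVal
  | failure : LaVal
deriving DecidableEq

/-- Results of `Memo-la`: `SuccessAt i'`, bare `Success`, or `Failure`. -/
inductive LaResult : Type where
  | successAt : ℕ → LaResult
  | success : LaResult
  | failure : LaResult
deriving DecidableEq

def LaVal.toResult : LaVal → LaResult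
  | .success => .success
  | .failure => .failure

def LaResult.elem {S : Type} : LaResult → LaRunElem S
  | .successAt i => .succAt i
  | .success => .succ
  | .failure => .fail

def Result.toLa : Result → LaResult
  | .successAt i => .successAt i
  | .failure => .failure

/-- The final recording of `Memo-la`: `M(q,i) := Success` if the result is
`SuccessAt i'` or `Success`, and `M(q,i) := Failure` if the result is `Failure`. -/
def laRecord [DecidableEq S] (M : S × ℕ → Option LaVal) (q : S) (i : ℕ) (r : LaResult) :
    S × ℕ → Option LaVal :=
  fun p => if p = (q, i) then
    some (match r with | .failure => LaVal.failure | _ => LaVal.success)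
  else M p

/-- Big-step semantics (with resulting memoization table and produced run) of the
memoized backtracking matching algorithm `Memo-la` for la-NFAs:
`MemoLaRun w A q i M M' r s` means the call `Memo-la^M_{A,w}(q, i)` terminates with
result `r`, final memoization table `M'`, and produces the run `s`. The memoization
table is shared between the top-level automaton and all sub-automata. -/
inductive MemoLaRun [DecidableEq S] (w : List Sigma) :
    SubNFA Sigma S → S → ℕ → (S × ℕ → Option LaVal) → (S × ℕ → Option LaVal) →
    LaResult → List (LaRunElem S) → Prop where
  | memoHit {A : SubNFA Sigma S} {q : S} {i : ℕ} {M : S × ℕ → Option LaVal} {v : LaVal} :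
      M (q, i) = some v →
      MemoLaRun w A q i M M v.toResult [.memo q i, v.toResult.elem]
  | accept {A : SubNFA Sigma S} {q : S} {i : ℕ} {M : S × ℕ → Option LaVal} :
      M (q, i) = none → q ∈ A.F →
      MemoLaRun w A q i M (laRecord M q i (.successAt i)) (.successAt i)
        [.call q i, .succAt i]
  | eps {A : SubNFA Sigma S} {q q' : S} {i : ℕ} {M M' : S × ℕ → Option LaVal}
      {r : LaResult} {s : List (LaRunElem S)} :
      M (q, i) = none → q ∉ A.F → A.T q = SubTrans.eps q' →
      MemoLaRun w A q' i M M' r s →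
      MemoLaRun w A q i M (laRecord M' q i r) r (.call q i :: s ++ [r.elem])
  | branchNoFail {A : SubNFA Sigma S} {q q' q'' : S} {i : ℕ}
      {M M' : S × ℕ → Option LaVal} {r : LaResult} {s : List (LaRunElem S)} :
      M (q, i) = none → q ∉ A.F → A.T q = SubTrans.branch q' q'' →
      MemoLaRun w A q' i M M' r s → r ≠ .failure →
      MemoLaRun w A q i M (laRecord M' q i r) r (.call q i :: s ++ [r.elem])
  | branchFail {A : SubNFA Sigma S} {q q' q'' : S} {i : ℕ}
      {M M1 M2 : S × ℕ → Option LaVal} {r : LaResult} {s1 s2 : List (LaRunElem S)} :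
      M (q, i) = none → q ∉ A.F → A.T q = SubTrans.branch q' q'' →
      MemoLaRun w A q' i M M1 .failure s1 →
      MemoLaRun w A q'' i M1 M2 r s2 →
      MemoLaRun w A q i M (laRecord M2 q i r) r (.call q i :: s1 ++ s2 ++ [r.elem])
  | charSucc {A : SubNFA Sigma S} {q q' : S} {σ : Sigma} {i : ℕ}
      {M M' : S × ℕ → Option LaVal} {r : LaResult} {s : List (LaRunElem S)} :
      M (q, i) = none → q ∉ A.F → A.T q = SubTrans.char σ q' →
      w[i]? = some σ →
      MemoLaRun w A q' (i + 1) M M' r s →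
      MemoLaRun w A q i M (laRecord M' q i r) r (.call q i :: s ++ [r.elem])
  | charFail {A : SubNFA Sigma S} {q q' : S} {σ : Sigma} {i : ℕ}
      {M : S × ℕ → Option LaVal} :
      M (q, i) = none → q ∉ A.F → A.T q = SubTrans.char σ q' →
      w[i]? ≠ some σ →
      MemoLaRun w A q i M (laRecord M q i .failure) .failure [.call q i, .fail]
  | plaSucc {A A' : SubNFA Sigma S} {q q' : S} {i : ℕ}
      {M M1 M2 : S × ℕ → Option LaVal} {r1 r : LaResult} {s1 s2 : List (LaRunElem S)} :
      M (q, i) = none → q ∉ A.F → A.T q = SubTrans.sub Kind.pla A' q' →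
      MemoLaRun w A' A'.q0 i M M1 r1 s1 → r1 ≠ .failure →
      MemoLaRun w A q' i M1 M2 r s2 →
      MemoLaRun w A q i M (laRecord M2 q i r) r (.call q i :: s1 ++ s2 ++ [r.elem])
  | plaFail {A A' : SubNFA Sigma S} {q q' : S} {i : ℕ}
      {M M1 : S × ℕ → Option LaVal} {s1 : List (LaRunElem S)} :
      M (q, i) = none → q ∉ A.F → A.T q = SubTrans.sub Kind.pla A' q' →
      MemoLaRun w A' A'.q0 i M M1 .failure s1 →
      MemoLaRun w A q i M (laRecord M1 q i .failure) .failure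
        (.call q i :: s1 ++ [LaRunElem.fail])

/-! ## `Memo-at` -/

/-- Results of `Memo-at`: `SuccessAt(i', K)` with a set `K` of delayed memoization keys,
or `Failure(j)` with a nesting depth `j`. -/
inductive AtResult (S : Type) : Type where
  | successAt : ℕ → Finset (S × ℕ) → AtResult S
  | failure : ℕ → AtResult S

/-- Elements of runs of `Memo-at`: calls `C(q,i)`, memoization-table invocations
`M(q,i)`, and results `S(i')` and `F(j)`. -/
inductive AtRunElem (S : Type) : Type where
  | call : S → ℕ → AtRunElem S
  | memo : S → ℕ → AtRunElem S
  | succ : ℕ → AtRunElem S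
  | fail : ℕ → AtRunElem S
deriving DecidableEq

def AtRunElem.isRet : AtRunElem S → Bool
  | .succ _ => true
  | .fail _ => true
  | _ => false

def AtRunElem.isCall : AtRunElem S → Bool
  | .call _ _ => true
  | .memo _ _ => true
  | _ => false

def atMemoToCall : AtRunElem S → Option (AtRunElem S)
  | .memo q i => some (.call q i)
  | _ => none

def AtResult.elem {S : Type} : AtResult S → AtRunElem S
  | .successAt i _ => .succ i
  | .failure j => .fail j

/-- `f`, converting results of `Memo-at` to results of `Match-(la,at)`. -/
def AtResult.toResult {S : Type} : AtResult S → Result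
  | .successAt i _ => .successAt i
  | .failure _ => .failure

/-- The final step of `Memo-at`: on success, the key `(q,i)` is added to the set of
delayed keys. -/
def atFinal [DecidableEq S] (q : S) (i : ℕ) : AtResult S → AtResult S
  | .successAt i' K => .successAt i' (insert (q, i) K)
  | .failure j => .failure j

/-- The final recording of `Memo-at`: `M(q,i) := Failure(j)` if the result is
`Failure(j)`. -/
def atRecord [DecidableEq S] (M : S × ℕ → Option ℕ) (q : S) (i : ℕ) :
    AtResult S → (S × ℕ → Option ℕ)
  | .failure j => fun p => if p = (q, i) then some j else M p
  | _ => M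

/-- Batch recording `M(k) := Failure(j)` for every `k ∈ K`. -/
def atBatch [DecidableEq S] (M : S × ℕ → Option ℕ) (K : Finset (S × ℕ)) (j : ℕ) :
    S × ℕ → Option ℕ :=
  fun p => if p ∈ K then some j else M p

/-- Big-step semantics (with resulting memoization table and produced run) of the
memoized backtracking matching algorithm `Memo-at` for at-NFAs:
`MemoAtRun A0 w A q i M M' r s` means the call `Memo-at^M_{A0,A,w}(q, i)` (with the
whole automaton `A0` and current sub-automaton `A`) terminates with result `r`, final
memoization table `M'`, and produces the run `s`. -/
inductive MemoAtRun [DecidableEq S] (A0 : SubNFA Sigma S) (w : List Sigma) :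
    SubNFA Sigma S → S → ℕ → (S × ℕ → Option ℕ) → (S × ℕ → Option ℕ) →
    AtResult S → List (AtRunElem S) → Prop where
  | memoHit {A : SubNFA Sigma S} {q : S} {i j : ℕ} {M : S × ℕ → Option ℕ} :
      M (q, i) = some j →
      MemoAtRun A0 w A q i M M (.failure j) [.memo q i, .fail j]
  | accept {A : SubNFA Sigma S} {q : S} {i : ℕ} {M : S × ℕ → Option ℕ} :
      M (q, i) = none → q ∈ A.F →
      MemoAtRun A0 w A q i M M (.successAt i {(q, i)}) [.call q i, .succ i]
  | eps {A : SubNFA Sigma S} {q q' : S} {i : ℕ} {M M' : S × ℕ → Option ℕ}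
      {r : AtResult S} {s : List (AtRunElem S)} :
      M (q, i) = none → q ∉ A.F → A.T q = SubTrans.eps q' →
      MemoAtRun A0 w A q' i M M' r s →
      MemoAtRun A0 w A q i M (atRecord M' q i r) (atFinal q i r)
        (.call q i :: s ++ [r.elem])
  | branchNoBT {A : SubNFA Sigma S} {q q' q'' : S} {i : ℕ} {M M' : S × ℕ → Option ℕ}
      {r : AtResult S} {s : List (AtRunElem S)} :
      M (q, i) = none → q ∉ A.F → A.T q = SubTrans.branch q' q'' →
      MemoAtRun A0 w A q' i M M' r s →
      (∀ j, r = AtResult.failure j → j ≠ A0.nu q) →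
      MemoAtRun A0 w A q i M (atRecord M' q i r) (atFinal q i r)
        (.call q i :: s ++ [r.elem])
  | branchBTSucc {A : SubNFA Sigma S} {q q' q'' : S} {i i'' : ℕ} {K : Finset (S × ℕ)}
      {M M1 M2 : S × ℕ → Option ℕ} {s1 s2 : List (AtRunElem S)} :
      M (q, i) = none → q ∉ A.F → A.T q = SubTrans.branch q' q'' →
      MemoAtRun A0 w A q' i M M1 (.failure (A0.nu q)) s1 →
      MemoAtRun A0 w A q'' i M1 M2 (.successAt i'' K) s2 →
      MemoAtRun A0 w A q i M M2 (atFinal q i (.successAt i'' K))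
        (.call q i :: s1 ++ s2 ++ [AtRunElem.succ i''])
  | branchBTFail {A : SubNFA Sigma S} {q q' q'' : S} {i j' : ℕ}
      {M M1 M2 : S × ℕ → Option ℕ} {s1 s2 : List (AtRunElem S)} :
      M (q, i) = none → q ∉ A.F → A.T q = SubTrans.branch q' q'' →
      MemoAtRun A0 w A q' i M M1 (.failure (A0.nu q)) s1 →
      MemoAtRun A0 w A q'' i M1 M2 (.failure j') s2 →
      MemoAtRun A0 w A q i M (atRecord M2 q i (.failure (min (A0.nu q) j')))
        (.failure (min (A0.nu q) j'))
        (.call q i :: s1 ++ s2 ++ [AtRunElem.fail (min (A0.nu q) j')])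
  | charSucc {A : SubNFA Sigma S} {q q' : S} {σ : Sigma} {i : ℕ}
      {M M' : S × ℕ → Option ℕ} {r : AtResult S} {s : List (AtRunElem S)} :
      M (q, i) = none → q ∉ A.F → A.T q = SubTrans.char σ q' →
      w[i]? = some σ →
      MemoAtRun A0 w A q' (i + 1) M M' r s →
      MemoAtRun A0 w A q i M (atRecord M' q i r) (atFinal q i r)
        (.call q i :: s ++ [r.elem])
  | charFail {A : SubNFA Sigma S} {q q' : S} {σ : Sigma} {i : ℕ}
      {M : S × ℕ → Option ℕ} :
      M (q, i) = none → q ∉ A.F → A.T q = SubTrans.char σ q' →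
      w[i]? ≠ some σ →
      MemoAtRun A0 w A q i M (atRecord M q i (.failure (A0.nu q)))
        (.failure (A0.nu q)) [.call q i, .fail (A0.nu q)]
  | subSuccSucc {A A' : SubNFA Sigma S} {q q' : S} {i i' i'' : ℕ}
      {K' K'' : Finset (S × ℕ)} {M M1 M2 : S × ℕ → Option ℕ}
      {s1 s2 : List (AtRunElem S)} :
      M (q, i) = none → q ∉ A.F → A.T q = SubTrans.sub Kind.at A' q' →
      MemoAtRun A0 w A' A'.q0 i M M1 (.successAt i' K') s1 →
      MemoAtRun A0 w A q' i' M1 M2 (.successAt i'' K'') s2 →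
      MemoAtRun A0 w A q i M M2 (atFinal q i (.successAt i'' (K' ∪ K'')))
        (.call q i :: s1 ++ s2 ++ [AtRunElem.succ i''])
  | subSuccFail {A A' : SubNFA Sigma S} {q q' : S} {i i' j : ℕ} {K' : Finset (S × ℕ)}
      {M M1 M2 : S × ℕ → Option ℕ} {s1 s2 : List (AtRunElem S)} :
      M (q, i) = none → q ∉ A.F → A.T q = SubTrans.sub Kind.at A' q' →
      MemoAtRun A0 w A' A'.q0 i M M1 (.successAt i' K') s1 →
      MemoAtRun A0 w A q' i' M1 M2 (.failure j) s2 →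
      MemoAtRun A0 w A q i M (atRecord (atBatch M2 K' j) q i (.failure j)) (.failure j)
        (.call q i :: s1 ++ s2 ++ [AtRunElem.fail j])
  | subFailHigh {A A' : SubNFA Sigma S} {q q' : S} {i j : ℕ}
      {M M1 : S × ℕ → Option ℕ} {s1 : List (AtRunElem S)} :
      M (q, i) = none → q ∉ A.F → A.T q = SubTrans.sub Kind.at A' q' →
      MemoAtRun A0 w A' A'.q0 i M M1 (.failure j) s1 →
      A0.nu q < j →
      MemoAtRun A0 w A q i M (atRecord M1 q i (.failure (A0.nu q)))
        (.failure (A0.nu q)) (.call q i :: s1 ++ [AtRunElem.fail (A0.nu q)])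
  | subFailLow {A A' : SubNFA Sigma S} {q q' : S} {i j : ℕ}
      {M M1 : S × ℕ → Option ℕ} {s1 : List (AtRunElem S)} :
      M (q, i) = none → q ∉ A.F → A.T q = SubTrans.sub Kind.at A' q' →
      MemoAtRun A0 w A' A'.q0 i M M1 (.failure j) s1 →
      j ≤ A0.nu q →
      MemoAtRun A0 w A q i M (atRecord M1 q i (.failure j)) (.failure j)
        (.call q i :: s1 ++ [AtRunElem.fail j])

/-! ## The combined algorithm `Memo-(la,at)` -/

/-- Values of the memoization table of `Memo-(la,at)`: `Success` or `Failure(j)`. -/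
inductive LaAtVal : Type where
  | success : LaAtVal
  | failure : ℕ → LaAtVal

/-- Results of `Memo-(la,at)`: `SuccessAt(i', K)`, bare `Success`, or `Failure(j)`. -/
inductive LaAtResult (S : Type) : Type where
  | successAt : ℕ → Finset (S × ℕ) → LaAtResult S
  | success : LaAtResult S
  | failure : ℕ → LaAtResult S

def LaAtVal.toResult {S : Type} : LaAtVal → LaAtResult S
  | .success => .success
  | .failure j => .failure j

/-- `f`, converting results of `Memo-(la,at)` to results of `Match-(la,at)`
(undefined on the bare value `Success`). -/
def LaAtResult.toResult? {S : Type} : LaAtResult S → Option Result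
  | .successAt i _ => some (.successAt i)
  | .success => none
  | .failure _ => some .failure

def laAtFinal [DecidableEq S] (q : S) (i : ℕ) : LaAtResult S → LaAtResult S
  | .successAt i' K => .successAt i' (insert (q, i) K)
  | r => r

def laAtRecord [DecidableEq S] (M : S × ℕ → Option LaAtVal) (q : S) (i : ℕ) :
    LaAtResult S → (S × ℕ → Option LaAtVal)
  | .successAt _ _ => M
  | .success => fun p => if p = (q, i) then some LaAtVal.success else M p
  | .failure j => fun p => if p = (q, i) then some (LaAtVal.failure j) else M p

def laAtBatch [DecidableEq S] (M : S × ℕ → Option LaAtVal) (K : Finset (S × ℕ))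
    (v : LaAtVal) : S × ℕ → Option LaAtVal :=
  fun p => if p ∈ K then some v else M p

/-- Big-step semantics (with resulting memoization table and the number of recursive
calls made) of the combined memoized backtracking matching algorithm `Memo-(la,at)`:
`MemoLaAtRun w A0 A q i M M' r n` means the call `Memo-(la,at)^M_{A0,A,w}(q, i)`
terminates with result `r`, final memoization table `M'`, making `n` calls in total.
On a positive look-ahead transition, the sub-automaton becomes the new whole automaton
(so nesting depths of atomic grouping are reset by look-around operators). -/
inductive MemoLaAtRun [DecidableEq S] (w : List Sigma) :
    SubNFA Sigma S → SubNFA Sigma S → S → ℕ →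
    (S × ℕ → Option LaAtVal) → (S × ℕ → Option LaAtVal) → LaAtResult S → ℕ → Prop where
  | memoHit {A0 A : SubNFA Sigma S} {q : S} {i : ℕ} {M : S × ℕ → Option LaAtVal}
      {v : LaAtVal} :
      M (q, i) = some v →
      MemoLaAtRun w A0 A q i M M v.toResult 1
  | accept {A0 A : SubNFA Sigma S} {q : S} {i : ℕ} {M : S × ℕ → Option LaAtVal} :
      M (q, i) = none → q ∈ A.F →
      MemoLaAtRun w A0 A q i M M (.successAt i {(q, i)}) 1
  | eps {A0 A : SubNFA Sigma S} {q q' : S} {i : ℕ} {M M' : S × ℕ → Option LaAtVal}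
      {r : LaAtResult S} {n : ℕ} :
      M (q, i) = none → q ∉ A.F → A.T q = SubTrans.eps q' →
      MemoLaAtRun w A0 A q' i M M' r n →
      MemoLaAtRun w A0 A q i M (laAtRecord M' q i (laAtFinal q i r)) (laAtFinal q i r)
        (n + 1)
  | branchNoBT {A0 A : SubNFA Sigma S} {q q' q'' : S} {i : ℕ}
      {M M' : S × ℕ → Option LaAtVal} {r : LaAtResult S} {n : ℕ} :
      M (q, i) = none → q ∉ A.F → A.T q = SubTrans.branch q' q'' →
      MemoLaAtRun w A0 A q' i M M' r n →
      (∀ j, r = LaAtResult.failure j → j ≠ A0.nu q) →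
      MemoLaAtRun w A0 A q i M (laAtRecord M' q i (laAtFinal q i r)) (laAtFinal q i r)
        (n + 1)
  | branchBTFail {A0 A : SubNFA Sigma S} {q q' q'' : S} {i j' : ℕ}
      {M M1 M2 : S × ℕ → Option LaAtVal} {n1 n2 : ℕ} :
      M (q, i) = none → q ∉ A.F → A.T q = SubTrans.branch q' q'' →
      MemoLaAtRun w A0 A q' i M M1 (.failure (A0.nu q)) n1 →
      MemoLaAtRun w A0 A q'' i M1 M2 (.failure j') n2 →
      MemoLaAtRun w A0 A q i M
        (laAtRecord M2 q i (.failure (min (A0.nu q) j')))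
        (.failure (min (A0.nu q) j')) (n1 + n2 + 1)
  | branchBTOther {A0 A : SubNFA Sigma S} {q q' q'' : S} {i : ℕ}
      {M M1 M2 : S × ℕ → Option LaAtVal} {r : LaAtResult S} {n1 n2 : ℕ} :
      M (q, i) = none → q ∉ A.F → A.T q = SubTrans.branch q' q'' →
      MemoLaAtRun w A0 A q' i M M1 (.failure (A0.nu q)) n1 →
      MemoLaAtRun w A0 A q'' i M1 M2 r n2 →
      (∀ j, r ≠ LaAtResult.failure j) →
      MemoLaAtRun w A0 A q i M (laAtRecord M2 q i (laAtFinal q i r)) (laAtFinal q i r)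
        (n1 + n2 + 1)
  | charSucc {A0 A : SubNFA Sigma S} {q q' : S} {σ : Sigma} {i : ℕ}
      {M M' : S × ℕ → Option LaAtVal} {r : LaAtResult S} {n : ℕ} :
      M (q, i) = none → q ∉ A.F → A.T q = SubTrans.char σ q' →
      w[i]? = some σ →
      MemoLaAtRun w A0 A q' (i + 1) M M' r n →
      MemoLaAtRun w A0 A q i M (laAtRecord M' q i (laAtFinal q i r)) (laAtFinal q i r)
        (n + 1)
  | charFail {A0 A : SubNFA Sigma S} {q q' : S} {σ : Sigma} {i : ℕ}
      {M : S × ℕ → Option LaAtVal} :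
      M (q, i) = none → q ∉ A.F → A.T q = SubTrans.char σ q' →
      w[i]? ≠ some σ →
      MemoLaAtRun w A0 A q i M (laAtRecord M q i (.failure (A0.nu q)))
        (.failure (A0.nu q)) 1
  | plaSuccAt {A0 A A' : SubNFA Sigma S} {q q' : S} {i i' : ℕ} {K' : Finset (S × ℕ)}
      {M M1 M2 : S × ℕ → Option LaAtVal} {r : LaAtResult S} {n1 n2 : ℕ} :
      M (q, i) = none → q ∉ A.F → A.T q = SubTrans.sub Kind.pla A' q' →
      MemoLaAtRun w A' A' A'.q0 i M M1 (.successAt i' K') n1 →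
      MemoLaAtRun w A0 A q' i (laAtBatch M1 K' LaAtVal.success) M2 r n2 →
      MemoLaAtRun w A0 A q i M (laAtRecord M2 q i (laAtFinal q i r)) (laAtFinal q i r)
        (n1 + n2 + 1)
  | plaBare {A0 A A' : SubNFA Sigma S} {q q' : S} {i : ℕ}
      {M M1 M2 : S × ℕ → Option LaAtVal} {r : LaAtResult S} {n1 n2 : ℕ} :
      M (q, i) = none → q ∉ A.F → A.T q = SubTrans.sub Kind.pla A' q' →
      MemoLaAtRun w A' A' A'.q0 i M M1 .success n1 →
      MemoLaAtRun w A0 A q' i M1 M2 r n2 →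
      MemoLaAtRun w A0 A q i M (laAtRecord M2 q i (laAtFinal q i r)) (laAtFinal q i r)
        (n1 + n2 + 1)
  | plaFail {A0 A A' : SubNFA Sigma S} {q q' : S} {i j : ℕ}
      {M M1 : S × ℕ → Option LaAtVal} {n1 : ℕ} :
      M (q, i) = none → q ∉ A.F → A.T q = SubTrans.sub Kind.pla A' q' →
      MemoLaAtRun w A' A' A'.q0 i M M1 (.failure j) n1 →
      MemoLaAtRun w A0 A q i M (laAtRecord M1 q i (.failure (A0.nu q)))
        (.failure (A0.nu q)) (n1 + 1)
  | atSuccSucc {A0 A A' : SubNFA Sigma S} {q q' : S} {i i' i'' : ℕ}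
      {K' K'' : Finset (S × ℕ)} {M M1 M2 : S × ℕ → Option LaAtVal} {n1 n2 : ℕ} :
      M (q, i) = none → q ∉ A.F → A.T q = SubTrans.sub Kind.at A' q' →
      MemoLaAtRun w A0 A' A'.q0 i M M1 (.successAt i' K') n1 →
      MemoLaAtRun w A0 A q' i' M1 M2 (.successAt i'' K'') n2 →
      MemoLaAtRun w A0 A q i M M2
        (laAtFinal q i (.successAt i'' (K' ∪ K''))) (n1 + n2 + 1)
  | atSuccBare {A0 A A' : SubNFA Sigma S} {q q' : S} {i i' : ℕ} {K' : Finset (S × ℕ)}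
      {M M1 M2 : S × ℕ → Option LaAtVal} {n1 n2 : ℕ} :
      M (q, i) = none → q ∉ A.F → A.T q = SubTrans.sub Kind.at A' q' →
      MemoLaAtRun w A0 A' A'.q0 i M M1 (.successAt i' K') n1 →
      MemoLaAtRun w A0 A q' i' M1 M2 .success n2 →
      MemoLaAtRun w A0 A q i M
        (laAtRecord (laAtBatch M2 K' LaAtVal.success) q i .success) .success
        (n1 + n2 + 1)
  | atSuccFail {A0 A A' : SubNFA Sigma S} {q q' : S} {i i' j : ℕ} {K' : Finset (S × ℕ)}
      {M M1 M2 : S × ℕ → Option LaAtVal} {n1 n2 : ℕ} :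
      M (q, i) = none → q ∉ A.F → A.T q = SubTrans.sub Kind.at A' q' →
      MemoLaAtRun w A0 A' A'.q0 i M M1 (.successAt i' K') n1 →
      MemoLaAtRun w A0 A q' i' M1 M2 (.failure j) n2 →
      MemoLaAtRun w A0 A q i M
        (laAtRecord (laAtBatch M2 K' (LaAtVal.failure j)) q i (.failure j))
        (.failure j) (n1 + n2 + 1)
  | atBare {A0 A A' : SubNFA Sigma S} {q q' : S} {i : ℕ}
      {M M1 : S × ℕ → Option LaAtVal} {n1 : ℕ} :
      M (q, i) = none → q ∉ A.F → A.T q = SubTrans.sub Kind.at A' q' →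
      MemoLaAtRun w A0 A' A'.q0 i M M1 .success n1 →
      MemoLaAtRun w A0 A q i M (laAtRecord M1 q i .success) .success (n1 + 1)
  | atFailHigh {A0 A A' : SubNFA Sigma S} {q q' : S} {i j : ℕ}
      {M M1 : S × ℕ → Option LaAtVal} {n1 : ℕ} :
      M (q, i) = none → q ∉ A.F → A.T q = SubTrans.sub Kind.at A' q' →
      MemoLaAtRun w A0 A' A'.q0 i M M1 (.failure j) n1 →
      A0.nu q < j →
      MemoLaAtRun w A0 A q i M (laAtRecord M1 q i (.failure (A0.nu q)))
        (.failure (A0.nu q)) (n1 + 1)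
  | atFailLow {A0 A A' : SubNFA Sigma S} {q q' : S} {i j : ℕ}
      {M M1 : S × ℕ → Option LaAtVal} {n1 : ℕ} :
      M (q, i) = none → q ∉ A.F → A.T q = SubTrans.sub Kind.at A' q' →
      MemoLaAtRun w A0 A' A'.q0 i M M1 (.failure j) n1 →
      j ≤ A0.nu q →
      MemoLaAtRun w A0 A q i M (laAtRecord M1 q i (.failure j)) (.failure j) (n1 + 1)

/-!
A result is recorded in the table exactly when it is a failure, and a call that makes a further
recursive call after some call has returned must have seen that call fail. Hence, in the absence
of ε-loops, no configuration `(q, i)` is evaluated twice: at its second call either it is still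
being evaluated, which would be a cycle in the acyclic recursive-call relation, or it has failed
and is found in the table. Evaluating `(q, i)` makes at most as many recursive calls as there are
transitions leaving `q`, so the run of a call at position `i` contains at most
`1 + (|w| - i + 1) * ∑ q, A.outDeg q` calls. Counting transitions by target instead of by source
gives `∑ q, A.inDeg q = ∑ q, A.outDeg q + 1`, where the extra `1` is the contribution of the
initial state and absorbs the outermost call.
-/

section Degrees

open Classical in
/-- The number of transitions leaving `q`, i.e. the largest number of recursive calls that
evaluating a configuration at `q` can make. A branch counts twice even if its two targets
coincide, in accordance with `NFA.inDeg`. -/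
noncomputable def NFA.outDeg (A : NFA Sigma S) (q : S) : ℕ :=
  if q ∈ A.F then 0 else
    match A.T q with
    | .eps _ => 1
    | .branch _ _ => 2
    | .char _ _ => 1

section

variable {A : NFA Sigma S} {q : S}

theorem NFA.outDeg_of_eps {q' : S} (hF : q ∉ A.F) (hT : A.T q = .eps q') : A.outDeg q = 1 := by
  simp [outDeg, hF, hT]

theorem NFA.outDeg_of_branch {q' q'' : S} (hF : q ∉ A.F) (hT : A.T q = .branch q' q'') :
    A.outDeg q = 2 := by
  simp [outDeg, hF, hT]

theorem NFA.outDeg_of_char {σ : Sigma} {q' : S} (hF : q ∉ A.F) (hT : A.T q = .char σ q') :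
    A.outDeg q = 1 := by
  simp [outDeg, hF, hT]

end

variable (A : NFA Sigma S)

open Classical in
/-- The number of transitions from `p` to `q`, the two targets of a branch being counted
separately. It is the common refinement of `NFA.outDeg` and `NFA.inDeg`. -/
noncomputable def NFA.edgeCount (p q : S) : ℕ :=
  (if p ∉ A.F ∧ A.T p = .eps q then 1 else 0) +
  (if p ∉ A.F ∧ ∃ σ, A.T p = .char σ q then 1 else 0) +
  (if p ∉ A.F ∧ ∃ q'', A.T p = .branch q q'' then 1 else 0) +
  (if p ∉ A.F ∧ ∃ q'', A.T p = .branch q'' q then 1 else 0)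

variable [Fintype S]

theorem NFA.outDeg_eq_sum_edgeCount (p : S) : A.outDeg p = ∑ q, A.edgeCount p q := by
  classical
  by_cases hF : p ∈ A.F
  · simp [outDeg, edgeCount, hF]
  · cases hT : A.T p <;> simp [outDeg, edgeCount, hF, hT, Finset.sum_add_distrib]

theorem NFA.inDeg_eq_sum_edgeCount [DecidableEq S] (q : S) :
    A.inDeg q = ∑ p, A.edgeCount p q + if q = A.q0 then 1 else 0 := by
  simp only [inDeg, edgeCount, Finset.card_filter, Finset.sum_add_distrib]
  congr!

theorem NFA.sum_inDeg : ∑ q, A.inDeg q = ∑ q, A.outDeg q + 1 := by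
  classical
  simp_rw [inDeg_eq_sum_edgeCount, outDeg_eq_sum_edgeCount]
  rw [Finset.sum_add_distrib, Finset.sum_comm]
  simp

theorem NFA.sum_outDeg_lt : ∑ q, A.outDeg q < A.inDegMax * Fintype.card S := by
  have sum_inDeg_le : ∑ q, A.inDeg q ≤ Fintype.card S * A.inDegMax :=
    Finset.sum_le_card_nsmul _ _ _ fun q hq ↦ Finset.le_sup (f := A.inDeg) hq
  rwa [A.sum_inDeg, mul_comm] at sum_inDeg_le

end Degrees

section Calls

/-- The recursive-call relation on configurations `(q, i)`: on the input `w`, evaluating the first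
configuration may call the second one. The second target of a branch is always included, although
it is called only if the first one fails. -/
inductive NFA.Calls (A : NFA Sigma S) (w : List Sigma) : S × ℕ → S × ℕ → Prop where
  | eps {q q' : S} {i : ℕ} : A.epsStep q q' → A.Calls w (q, i) (q', i)
  | char {q q' : S} {σ : Sigma} {i : ℕ} : q ∉ A.F → A.T q = .char σ q' → w[i]? = some σ →
      A.Calls w (q, i) (q', i + 1)

variable {A : NFA Sigma S} {w : List Sigma}

theorem NFA.Calls.snd_mem_Icc {p p' : S × ℕ} {i : ℕ} (h : A.Calls w p p')
    (hp : p.2 ∈ Set.Icc i w.length) : p'.2 ∈ Set.Icc i w.length := by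
  cases h with
  | eps _ => exact hp
  | char _ _ hσ =>
    obtain ⟨hlt, -⟩ := List.getElem?_eq_some_iff.mp hσ
    exact ⟨hp.1.trans (Nat.le_succ _), hlt⟩

theorem snd_mem_Icc_of_reflTransGen_calls {p p' : S × ℕ}
    (h : Relation.ReflTransGen (A.Calls w) p p') (hp : p.2 ≤ w.length) :
    p'.2 ∈ Set.Icc p.2 w.length := by
  induction h with
  | refl => exact ⟨le_rfl, hp⟩
  | tail _ hcall ih => exact hcall.snd_mem_Icc ih

theorem NFA.NoEpsLoops.wellFounded_epsStep [Finite S] (hA : A.NoEpsLoops) :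
    WellFounded (Function.swap A.epsStep) := by
  have : Std.Irrefl (Relation.TransGen (Function.swap A.epsStep)) :=
    ⟨fun q h ↦ hA q (Relation.transGen_swap.mp h)⟩
  exact Subrelation.wf Relation.TransGen.single
    (Finite.wellFounded_of_trans_of_irrefl (Relation.TransGen (Function.swap A.epsStep)))

theorem NFA.NoEpsLoops.wellFounded_calls [Finite S] (hA : A.NoEpsLoops) (w : List Sigma) :
    WellFounded (Function.swap (A.Calls w)) := by
  refine Subrelation.wf (fun {p' p} h ↦ ?_)
    (InvImage.wf (fun p : S × ℕ ↦ (w.length - p.2, p.1))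
      (wellFounded_lt.prod_lex hA.wellFounded_epsStep))
  cases h with
  | eps hstep => exact Prod.Lex.right _ hstep
  | char _ _ hσ =>
    obtain ⟨hlt, -⟩ := List.getElem?_eq_some_iff.mp hσ
    exact Prod.Lex.left _ _ (Nat.sub_succ_lt_self _ _ hlt)

theorem NFA.NoEpsLoops.not_transGen_calls_self [Finite S] (hA : A.NoEpsLoops) (p : S × ℕ) :
    ¬ Relation.TransGen (A.Calls w) p p := by
  have := (hA.wellFounded_calls w).transGen.irrefl.irrefl p
  rwa [Relation.transGen_swap] at this

end Calls

section Termination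

variable [DecidableEq S] {A : NFA Sigma S}

theorem NFA.NoEpsLoops.exists_memoRun [Finite S] (hA : A.NoEpsLoops) (w : List Sigma)
    (p : S × ℕ) (M : S × ℕ → Bool) : ∃ M' r s, MemoRun A w p.1 p.2 M M' r s := by
  induction p using (hA.wellFounded_calls w).induction generalizing M with
  | _ p ih =>
  obtain ⟨q, i⟩ := p
  cases hM : M (q, i) with
  | true => exact ⟨_, _, _, .memoHit hM⟩
  | false =>
  by_cases hF : q ∈ A.F
  · exact ⟨_, _, _, .accept hM hF⟩
  cases hT : A.T q with
  | eps q' =>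
    obtain ⟨_, _, _, hrun⟩ := ih (q', i) (.eps ⟨hF, .inl hT⟩) M
    exact ⟨_, _, _, .eps hM hF hT hrun⟩
  | branch q' q'' =>
    obtain ⟨M', r, _, hrun⟩ := ih (q', i) (.eps ⟨hF, .inr (.inl ⟨q'', hT⟩)⟩) M
    cases r with
    | successAt j => exact ⟨_, _, _, .branchSucc hM hF hT hrun⟩
    | failure =>
      obtain ⟨_, _, _, hrun'⟩ := ih (q'', i) (.eps ⟨hF, .inr (.inr ⟨q', hT⟩)⟩) M'
      exact ⟨_, _, _, .branchFail hM hF hT hrun hrun'⟩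
  | char σ q' =>
    by_cases hσ : w[i]? = some σ
    · obtain ⟨_, _, _, hrun⟩ := ih (q', i + 1) (.char hF hT hσ) M
      exact ⟨_, _, _, .charSucc hM hF hT hσ hrun⟩
    · exact ⟨_, _, _, .charFail hM hF hT hσ⟩

end Termination

section Evaluated

/-- The configurations `(q, i)` of the elements `C(q, i)` of a run, in order: those that are
evaluated, as opposed to answered from the memoization table. -/
def evaluated (s : List (RunElem S)) : List (S × ℕ) :=
  s.filterMap fun
    | .call q i => some (q, i)
    | _ => none

@[simp] theorem evaluated_nil : evaluated ([] : List (RunElem S)) = [] := rfl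

@[simp] theorem evaluated_call_cons (q : S) (i : ℕ) (s : List (RunElem S)) :
    evaluated (.call q i :: s) = (q, i) :: evaluated s := rfl

@[simp] theorem evaluated_memo_cons (q : S) (i : ℕ) (s : List (RunElem S)) :
    evaluated (.memo q i :: s) = evaluated s := rfl

@[simp] theorem evaluated_succ_cons (i : ℕ) (s : List (RunElem S)) :
    evaluated (.succ i :: s) = evaluated s := rfl

@[simp] theorem evaluated_fail_cons (s : List (RunElem S)) :
    evaluated (.fail :: s) = evaluated s := rfl

@[simp] theorem evaluated_elem_cons (r : Result) (s : List (RunElem S)) :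
    evaluated (r.elem :: s) = evaluated s := by
  cases r <;> rfl

@[simp] theorem evaluated_append (s t : List (RunElem S)) :
    evaluated (s ++ t) = evaluated s ++ evaluated t :=
  List.filterMap_append

end Evaluated

section CallCount

@[simp] theorem callCount_nil (isCall : α → Bool) : callCount isCall [] = 0 := rfl

@[simp] theorem callCount_append (isCall : α → Bool) (s t : List α) :
    callCount isCall (s ++ t) = callCount isCall s + callCount isCall t := by
  simp [callCount]

@[simp] theorem callCount_call_cons (q : S) (i : ℕ) (s : List (RunElem S)) :
    callCount RunElem.isCall (.call q i :: s) = callCount RunElem.isCall s + 1 := rfl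

@[simp] theorem callCount_memo_cons (q : S) (i : ℕ) (s : List (RunElem S)) :
    callCount RunElem.isCall (.memo q i :: s) = callCount RunElem.isCall s + 1 := rfl

@[simp] theorem callCount_succ_cons (i : ℕ) (s : List (RunElem S)) :
    callCount RunElem.isCall (.succ i :: s) = callCount RunElem.isCall s := rfl

@[simp] theorem callCount_fail_cons (s : List (RunElem S)) :
    callCount RunElem.isCall (.fail :: s) = callCount RunElem.isCall s := rfl

@[simp] theorem callCount_elem_cons (r : Result) (s : List (RunElem S)) :
    callCount RunElem.isCall (r.elem :: s) = callCount RunElem.isCall s := by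
  cases r <;> rfl

end CallCount

section Cost

variable [DecidableEq S] {A : NFA Sigma S} {w : List Sigma} {q : S} {i : ℕ}
  {M M' : S × ℕ → Bool} {r : Result} {s : List (RunElem S)}

theorem MemoRun.callCount_le_sum_outDeg (h : MemoRun A w q i M M' r s) :
    callCount RunElem.isCall s ≤ 1 + ((evaluated s).map fun p ↦ A.outDeg p.1).sum := by
  induction h with
  | memoHit | accept | charFail => simp
  | eps _ hF hT _ ih => simpa [NFA.outDeg_of_eps hF hT, add_comm] using ih
  | charSucc _ hF hT _ _ ih => simpa [NFA.outDeg_of_char hF hT, add_comm] using ih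
  | branchSucc _ hF hT _ ih =>
    simp only [List.cons_append, callCount_call_cons, callCount_append, callCount_succ_cons,
      callCount_nil, evaluated_call_cons, evaluated_append, evaluated_succ_cons, evaluated_nil,
      List.append_nil, List.map_cons, List.sum_cons, NFA.outDeg_of_branch hF hT]
    omega
  | branchFail _ hF hT _ _ ih ih' =>
    simp only [List.cons_append, List.append_assoc, callCount_call_cons, callCount_append,
      callCount_elem_cons, callCount_nil, evaluated_call_cons, evaluated_append,
      evaluated_elem_cons, evaluated_nil, List.append_nil, List.map_cons, List.map_append,
      List.sum_cons, List.sum_append, NFA.outDeg_of_branch hF hT]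
    omega

theorem le_recFail (M : S × ℕ → Bool) (q : S) (i : ℕ) (r : Result) : M ≤ recFail M q i r := by
  cases r with
  | successAt => exact le_rfl
  | failure =>
    intro p
    by_cases hp : p = (q, i) <;> simp [recFail, hp]

theorem recFail_failure_self (M : S × ℕ → Bool) (q : S) (i : ℕ) :
    recFail M q i .failure (q, i) = true := by
  simp [recFail]

theorem MemoRun.table_le (h : MemoRun A w q i M M' r s) : M ≤ M' := by
  induction h with
  | memoHit | accept => exact le_rfl
  | eps _ _ _ _ ih | charSucc _ _ _ _ _ ih => exact ih.trans (le_recFail _ _ _ _)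
  | branchSucc _ _ _ _ ih => exact ih
  | branchFail _ _ _ _ _ ih ih' => exact (ih.trans ih').trans (le_recFail _ _ _ _)
  | charFail => exact le_recFail _ _ _ _

theorem MemoRun.eq_false_of_mem_evaluated (h : MemoRun A w q i M M' r s) {p : S × ℕ}
    (hp : p ∈ evaluated s) : M p = false := by
  induction h with
  | memoHit => simp at hp
  | accept hM | charFail hM =>
    obtain rfl : p = _ := by simpa using hp
    exact hM
  | eps hM _ _ _ ih | charSucc hM _ _ _ _ ih | branchSucc hM _ _ _ ih =>
    obtain rfl | hp : p = _ ∨ p ∈ evaluated _ := by simpa using hp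
    exacts [hM, ih hp]
  | branchFail hM _ _ hrun _ ih ih' =>
    obtain rfl | hp | hp : p = _ ∨ p ∈ evaluated _ ∨ p ∈ evaluated _ := by simpa using hp
    exacts [hM, ih hp, Bool.eq_false_of_le_false (ih' hp ▸ hrun.table_le p)]

theorem MemoRun.eq_true_of_mem_evaluated (h : MemoRun A w q i M M' .failure s) {p : S × ℕ}
    (hp : p ∈ evaluated s) : M' p = true := by
  generalize hr : Result.failure = r at h
  induction h with
  | memoHit => simp at hp
  | accept | branchSucc => cases hr
  | @charFail q _ _ i M =>
    obtain rfl : p = (q, i) := by simpa using hp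
    exact recFail_failure_self M q i
  | @eps q _ i _ M' _ _ _ _ _ _ ih | @charSucc q _ _ i _ M' _ _ _ _ _ _ _ ih =>
    subst hr
    obtain rfl | hp : p = (q, i) ∨ p ∈ evaluated _ := by simpa using hp
    · exact recFail_failure_self M' q i
    · exact Bool.eq_true_of_true_le (ih hp rfl ▸ le_recFail M' q i _ p)
  | @branchFail q _ _ i _ _ M'' _ _ _ _ _ _ _ hrun' ih ih' =>
    subst hr
    obtain rfl | hp | hp : p = (q, i) ∨ p ∈ evaluated _ ∨ p ∈ evaluated _ := by simpa using hp
    · exact recFail_failure_self M'' q i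
    · exact Bool.eq_true_of_true_le
        (ih hp rfl ▸ (hrun'.table_le.trans (le_recFail M'' q i .failure)) p)
    · exact Bool.eq_true_of_true_le (ih' hp rfl ▸ le_recFail M'' q i .failure p)

theorem MemoRun.reflTransGen_calls_of_mem_evaluated (h : MemoRun A w q i M M' r s) {p : S × ℕ}
    (hp : p ∈ evaluated s) : Relation.ReflTransGen (A.Calls w) (q, i) p := by
  induction h with
  | memoHit => simp at hp
  | accept | charFail =>
    obtain rfl : p = _ := by simpa using hp
    exact .refl
  | eps _ hF hT _ ih =>
    obtain rfl | hp : p = _ ∨ p ∈ evaluated _ := by simpa using hp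
    exacts [.refl, .head (.eps ⟨hF, .inl hT⟩) (ih hp)]
  | charSucc _ hF hT hσ _ ih =>
    obtain rfl | hp : p = _ ∨ p ∈ evaluated _ := by simpa using hp
    exacts [.refl, .head (.char hF hT hσ) (ih hp)]
  | branchSucc _ hF hT _ ih =>
    obtain rfl | hp : p = _ ∨ p ∈ evaluated _ := by simpa using hp
    exacts [.refl, .head (.eps ⟨hF, .inr (.inl ⟨_, hT⟩)⟩) (ih hp)]
  | branchFail _ hF hT _ _ ih ih' =>
    obtain rfl | hp | hp : p = _ ∨ p ∈ evaluated _ ∨ p ∈ evaluated _ := by simpa using hp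
    exacts [.refl, .head (.eps ⟨hF, .inr (.inl ⟨_, hT⟩)⟩) (ih hp),
      .head (.eps ⟨hF, .inr (.inr ⟨_, hT⟩)⟩) (ih' hp)]

theorem MemoRun.notMem_evaluated_of_calls [Finite S] (hA : A.NoEpsLoops)
    (h : MemoRun A w q i M M' r s) {p : S × ℕ} (hcall : A.Calls w p (q, i)) : p ∉ evaluated s :=
  fun hp ↦ hA.not_transGen_calls_self p
    (.head' hcall (h.reflTransGen_calls_of_mem_evaluated hp))

theorem MemoRun.nodup_evaluated [Finite S] (hA : A.NoEpsLoops) (h : MemoRun A w q i M M' r s) :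
    (evaluated s).Nodup := by
  induction h with
  | memoHit | accept | charFail => simp
  | eps _ hF hT hrun ih =>
    have caller_notMem := hrun.notMem_evaluated_of_calls hA (.eps ⟨hF, .inl hT⟩)
    simp [caller_notMem, ih]
  | charSucc _ hF hT hσ hrun ih =>
    have caller_notMem := hrun.notMem_evaluated_of_calls hA (.char hF hT hσ)
    simp [caller_notMem, ih]
  | branchSucc _ hF hT hrun ih =>
    have caller_notMem := hrun.notMem_evaluated_of_calls hA (.eps ⟨hF, .inr (.inl ⟨_, hT⟩)⟩)
    simp [caller_notMem, ih]
  | branchFail _ hF hT hrun hrun' ih ih' =>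
    have caller_notMem := hrun.notMem_evaluated_of_calls hA (.eps ⟨hF, .inr (.inl ⟨_, hT⟩)⟩)
    have caller_notMem' := hrun'.notMem_evaluated_of_calls hA (.eps ⟨hF, .inr (.inr ⟨_, hT⟩)⟩)
    -- What the failed first alternative evaluated is recorded when the second one starts.
    have disjoint : (evaluated _).Disjoint (evaluated _) := fun p hp hp' ↦
      Bool.false_ne_true
        ((hrun'.eq_false_of_mem_evaluated hp').symm.trans (hrun.eq_true_of_mem_evaluated hp))
    simp [caller_notMem, caller_notMem', ih.append ih' disjoint]

variable [Fintype S]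

theorem MemoRun.sum_outDeg_evaluated_le (hA : A.NoEpsLoops) (hi : i ≤ w.length)
    (h : MemoRun A w q i M M' r s) :
    ((evaluated s).map fun p ↦ A.outDeg p.1).sum ≤ (w.length - i + 1) * ∑ q, A.outDeg q := by
  have evaluated_subset :
      (evaluated s).toFinset ⊆ Finset.univ ×ˢ Finset.Icc i w.length := fun p hp ↦ by
    have reachable := h.reflTransGen_calls_of_mem_evaluated (List.mem_toFinset.mp hp)
    simpa using snd_mem_Icc_of_reflTransGen_calls reachable hi
  calc ((evaluated s).map fun p ↦ A.outDeg p.1).sum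
      = ∑ p ∈ (evaluated s).toFinset, A.outDeg p.1 :=
        (List.sum_toFinset _ (h.nodup_evaluated hA)).symm
    _ ≤ ∑ p ∈ Finset.univ ×ˢ Finset.Icc i w.length, A.outDeg p.1 :=
        Finset.sum_le_sum_of_subset evaluated_subset
    _ = (w.length - i + 1) * ∑ q, A.outDeg q := by
        simp [Finset.sum_product, Finset.mul_sum, Nat.sub_add_comm hi]

theorem MemoRun.callCount_le (hA : A.NoEpsLoops) (hi : i ≤ w.length)
    (h : MemoRun A w q i M M' r s) :
    callCount RunElem.isCall s ≤ A.inDegMax * Fintype.card S * (w.length - i + 1) :=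
  calc callCount RunElem.isCall s
      ≤ 1 + (w.length - i + 1) * ∑ q, A.outDeg q := by
        grw [h.callCount_le_sum_outDeg, h.sum_outDeg_evaluated_le hA hi]
    _ ≤ (w.length - i + 1) * (∑ q, A.outDeg q + 1) := by
        rw [mul_add_one]; omega
    _ ≤ (w.length - i + 1) * (A.inDegMax * Fintype.card S) := by
        gcongr
        exact A.sum_outDeg_lt
    _ = A.inDegMax * Fintype.card S * (w.length - i + 1) := mul_comm _ _

end Cost

theorem memo_linear_time_general {Sigma S : Type} [Fintype S] [DecidableEq S]
    (A : NFA Sigma S) (hLoop : A.NoEpsLoops) (w : List Sigma) (q : S) (i : ℕ)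
    (hi : i ≤ w.length) (M : S × ℕ → Bool) :
    ∃ (M' : S × ℕ → Bool) (r : Result) (s : List (RunElem S)),
      MemoRun A w q i M M' r s ∧
        callCount RunElem.isCall s ≤ A.inDegMax * Fintype.card S * (w.length - i + 1) := by
  obtain ⟨M', r, s, hrun⟩ := hLoop.exists_memoRun w (q, i) M
  exact ⟨M', r, s, hrun, hrun.callCount_le hLoop hi⟩

/-- **Theorem 1** (linear-time complexity of memoized backtracking matching):
for every NFA `A` without ε-loops, every input string `w`, and every starting position
`i ∈ {0, …, |w|}`, the call `Memo^{M0}_{A,w}(q0, i)` terminates, and the total number of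
recursive calls it makes is at most `#in(A) · |Q| · (|w| + 1)`. -/
theorem memo_linear_time {Sigma S : Type} [Fintype S] [DecidableEq S]
    (A : NFA Sigma S) (hLoop : A.NoEpsLoops)
    (w : List Sigma) (i : ℕ) (hi : i ≤ w.length) :
    ∃ (M' : S × ℕ → Bool) (r : Result) (s : List (RunElem S)),
      MemoRun A w A.q0 i (fun _ => false) M' r s ∧
        callCount RunElem.isCall s ≤ A.inDegMax * Fintype.card S * (w.length + 1) := by
  obtain ⟨M', r, s, hrun, hs⟩ := memo_linear_time_general A hLoop w A.q0 i hi (fun _ ↦ false)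
  exact ⟨M', r, s, hrun, hs.trans (by gcongr; exact Nat.sub_le _ _)⟩

end RegexMemo
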